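/- Let n be even and let C_n(ℓ;a) be a circulant graph with symmetric edge lengths ℓ_1,…,ℓ_d > 0. Then for every k ∈ ℝ with sin(kℓ_h) ≠ 0 for all h, det M(k) = p_0(k) · p_{n/2}(k) · ∏_{j=1}^{(n/2)−1} p_j(k)². -/

import Mathlib

open Finset

/-- The secular matrix `M(k)` of the quantum circulant graph `C_n(ℓ; a)` with
symmetric edge lengths. -/
noncomputable def Mmat (n d : ℕ) (a : Fin d → ℕ) (ℓ : Fin d → ℝ) (k : ℝ) :
    Matrix (ZMod n) (ZMod n) ℝ :=
  fun i j =>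
    if i = j then -2 * ∑ h : Fin d, Real.cos (k * ℓ h) / Real.sin (k * ℓ h)
    else ∑ h : Fin d,
      if i - j = (a h : ZMod n) ∨ i - j = -(a h : ZMod n)
        then 1 / Real.sin (k * ℓ h) else 0



noncomputable def lamR (n d : ℕ) (a : Fin d → ℕ) (ℓ : Fin d → ℝ) (k : ℝ) (j : ℕ) : ℝ :=
  2 * ∑ h : Fin d,
            (-(Real.cos (k * ℓ h) / Real.sin (k * ℓ h)) +
              Real.cos (2 * Real.pi * j * a h / n) * (1 / Real.sin (k * ℓ h)))

lemma prod_fold (g : ℕ → ℝ) (m : ℕ) (hg : ∀ i ≤ 2 * (m + 1), g (2 * (m + 1) - i) = g i) :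
    ∏ i ∈ Finset.range (2 * (m + 1)), g i =
      g 0 * g (m + 1) * ∏ j ∈ Finset.Icc 1 m, g j ^ 2 := by
  have h1 : ∏ j ∈ Finset.Icc 1 m, g j ^ 2 = ∏ i ∈ Finset.range m, g (i + 1) ^ 2 := by
    rw [Finset.range_eq_Ico, Finset.prod_Ico_add' (fun i => g i ^ 2) 0 m 1]
    rfl
  have h2 : ∏ i ∈ Finset.range m, g (m + 1 + (i + 1)) = ∏ i ∈ Finset.range m, g (i + 1) := by
    rw [← Finset.prod_range_reflect]
    apply Finset.prod_congr rfl
    intro i hi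
    have hi' := Finset.mem_range.1 hi
    rw [← hg (i + 1) (by omega)]
    congr 1
    omega
  rw [h1, two_mul, Finset.prod_range_add, Finset.prod_range_succ', Finset.prod_range_succ', h2,
    Finset.prod_pow]
  simp only [add_zero]
  ring

lemma prod_zmod (n : ℕ) [NeZero n] (g : ℕ → ℝ) :
    ∏ j : ZMod n, g j.val = ∏ i ∈ Finset.range n, g i := by
  cases n with
  | zero => exact absurd rfl (NeZero.ne 0)
  | succ n => exact Fin.prod_univ_eq_prod_range g (n + 1)

lemma char_add (n : ℕ) [NeZero n] (j : ZMod n) (a : ℕ) :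
    ZMod.stdAddChar ((a : ZMod n) * j) + ZMod.stdAddChar (-((a : ZMod n) * j)) =
      ((2 * Real.cos (2 * Real.pi * j.val * a / n) : ℝ) : ℂ) := by
  have h1 : (a : ZMod n) * j = (((a * j.val : ℕ) : ℤ) : ZMod n) := by
    push_cast
    rw [ZMod.natCast_zmod_val]
  rw [h1, ← Int.cast_neg, ZMod.stdAddChar_coe, ZMod.stdAddChar_coe]
  push_cast
  rw [Complex.two_cos]
  congr 2 <;> ring

lemma Mmat_entry (n d : ℕ) [NeZero n] (a : Fin d → ℕ) (hpos : ∀ h, 0 < a h)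
    (hlt : ∀ h, 2 * a h < n) (ℓ : Fin d → ℝ) (k : ℝ) (i m : ZMod n) :
    Mmat n d a ℓ k i m = ∑ h : Fin d,
      ((if m = i then -2 * (Real.cos (k * ℓ h) / Real.sin (k * ℓ h)) else 0) +
       (if m = i - (a h : ZMod n) then 1 / Real.sin (k * ℓ h) else 0) +
       (if m = i + (a h : ZMod n) then 1 / Real.sin (k * ℓ h) else 0)) := by
  have ha : ∀ h, (a h : ZMod n) ≠ 0 := by
    intro h h0
    rw [ZMod.natCast_eq_zero_iff] at h0
    have := Nat.le_of_dvd (hpos h) h0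
    have := hlt h
    have := hpos h
    omega
  have h2a : ∀ h, (a h : ZMod n) + a h ≠ 0 := by
    intro h h0
    rw [← Nat.cast_add, ZMod.natCast_eq_zero_iff] at h0
    have := hpos h
    have := Nat.le_of_dvd (by omega) h0
    have := hlt h
    omega
  unfold Mmat
  by_cases hi : i = m
  · subst hi
    rw [if_pos rfl]
    rw [Finset.mul_sum]
    apply Finset.sum_congr rfl
    intro h _
    have := ha h
    have t : i ≠ i - (a h : ZMod n) := fun e => this (by linear_combination e)
    simp [ha h, t]
  · rw [if_neg hi]
    apply Finset.sum_congr rfl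
    intro h _
    have e1 : (i - m = (a h : ZMod n)) ↔ m = i - a h := by
      constructor <;> intro h
      · rw [← h]; ring
      · rw [h]; ring
    have e2 : (i - m = -(a h : ZMod n)) ↔ m = i + a h := by
      constructor <;> intro h
      · linear_combination -h
      · rw [h]; ring
    rw [if_neg (Ne.symm hi)]
    simp only [e1, e2]
    by_cases c1 : m = i - a h
    · have c2 : ¬ m = i + a h := by
        intro c2
        apply h2a h
        linear_combination c1 - c2
      rw [if_pos (Or.inl c1), if_pos c1, if_neg c2]
      ring
    · simp [c1]

lemma Mmat_det_prod (n d : ℕ) [NeZero n] (a : Fin d → ℕ) (hpos : ∀ h, 0 < a h)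
    (hlt : ∀ h, 2 * a h < n) (ℓ : Fin d → ℝ) (k : ℝ) :
    (Mmat n d a ℓ k).det = ∏ j : ZMod n, lamR n d a ℓ k j.val := by
  let F : Matrix (ZMod n) (ZMod n) ℂ := fun i j => ZMod.stdAddChar (i * j)
  let G : Matrix (ZMod n) (ZMod n) ℂ := fun i j => ZMod.stdAddChar (-(i * j))
  have hFG : F * G = (n : ℂ) • (1 : Matrix (ZMod n) (ZMod n) ℂ) := by
    ext i j
    rw [Matrix.mul_apply, Matrix.smul_apply, Matrix.one_apply]
    have : ∀ m, F i m * G m j = ZMod.stdAddChar (m * (i - j)) := by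
      intro m
      simp only [F, G]
      rw [← AddChar.map_add_eq_mul]
      congr 1
      ring
    simp only [this]
    rw [AddChar.sum_mulShift _ (ZMod.isPrimitive_stdAddChar n)]
    simp [sub_eq_zero, ZMod.card]
  have hF : F.det ≠ 0 := by
    intro h0
    have := congrArg Matrix.det hFG
    rw [Matrix.det_mul, h0, zero_mul, Matrix.det_smul, Matrix.det_one, mul_one] at this
    exact pow_ne_zero _ (Nat.cast_ne_zero.2 (NeZero.ne n)) this.symm
  have hMF : (Mmat n d a ℓ k).map Complex.ofRealHom * F =
      F * Matrix.diagonal (fun j : ZMod n => ((lamR n d a ℓ k j.val : ℝ) : ℂ)) := by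
    ext i j
    rw [Matrix.mul_diagonal, Matrix.mul_apply]
    simp only [Matrix.map_apply, Mmat_entry n d a hpos hlt, F, map_sum, map_add, Finset.sum_mul,
      add_mul]
    rw [Finset.sum_comm]
    simp only [Finset.sum_add_distrib, apply_ite Complex.ofRealHom, map_zero, ite_mul, zero_mul,
      Finset.sum_ite_eq', Finset.mem_univ, if_true]
    simp only [← Finset.sum_add_distrib, lamR]
    push_cast
    rw [Finset.mul_sum, Finset.mul_sum]
    apply Finset.sum_congr rfl
    intro h _
    have hc := char_add n j (a h)
    rw [sub_mul, add_mul, sub_eq_add_neg, AddChar.map_add_eq_mul, AddChar.map_add_eq_mul]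
    push_cast at hc
    simp only [Complex.ofRealHom_eq_coe]
    push_cast
    linear_combination (ZMod.stdAddChar (i * j) * (1 / Complex.sin (k * ℓ h))) * hc
  have hdet := congrArg Matrix.det hMF
  rw [Matrix.det_mul, Matrix.det_mul, Matrix.det_diagonal, mul_comm] at hdet
  have h3 := mul_left_cancel₀ hF hdet
  have h4 : ((Mmat n d a ℓ k).map Complex.ofRealHom).det =
      (((Mmat n d a ℓ k).det : ℝ) : ℂ) := (RingHom.map_det Complex.ofRealHom _).symm
  rw [h4] at h3
  exact_mod_cast h3

lemma tan_half (x : ℝ) (hx : Real.sin x ≠ 0) :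
    Real.tan (x / 2) = -(Real.cos x / Real.sin x) + 1 / Real.sin x ∧
    -(Real.cos (x / 2) / Real.sin (x / 2)) =
      -(Real.cos x / Real.sin x) + (-1) * (1 / Real.sin x) := by
  obtain ⟨y, rfl⟩ : ∃ y, x = 2 * y := ⟨x / 2, by ring⟩
  rw [Real.sin_two_mul] at *
  have hs : Real.sin y ≠ 0 := fun h => hx (by rw [h]; ring)
  have hc : Real.cos y ≠ 0 := fun h => hx (by rw [h]; ring)
  rw [mul_div_cancel_left₀ _ (two_ne_zero), Real.tan_eq_sin_div_cos, Real.cos_two_mul]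
  have := Real.sin_sq_add_cos_sq y
  constructor
  · field_simp
    linear_combination 2 * this
  · field_simp
    ring


/-- For even `n`, the secular determinant of the edge-symmetric quantum
circulant graph factorizes as
`det M(k) = p_0(k) p_{n/2}(k) ∏_{j=1}^{n/2-1} p_j(k)²`. -/
theorem Mmat_det_even (n d : ℕ) [NeZero n] (hn : Even n) (a : Fin d → ℕ)
    (hd : 1 ≤ d) (hpos : ∀ h, 0 < a h) (hmono : StrictMono a)
    (hlt : ∀ h, 2 * a h < n)
    (ℓ : Fin d → ℝ) (hℓ : ∀ h, 0 < ℓ h) (k : ℝ)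
    (hk : ∀ h, Real.sin (k * ℓ h) ≠ 0) :
    (Mmat n d a ℓ k).det =
      (2 * ∑ h : Fin d, Real.tan (k * ℓ h / 2)) *
      (2 * (∑ h ∈ Finset.univ.filter (fun h => Even (a h)), Real.tan (k * ℓ h / 2)
          - ∑ h ∈ Finset.univ.filter (fun h => Odd (a h)),
              Real.cos (k * ℓ h / 2) / Real.sin (k * ℓ h / 2))) *
        ∏ j ∈ Finset.Icc 1 (n / 2 - 1),
          (2 * ∑ h : Fin d,
            (-(Real.cos (k * ℓ h) / Real.sin (k * ℓ h)) +
              Real.cos (2 * Real.pi * j * a h / n) * (1 / Real.sin (k * ℓ h)))) ^ 2 := by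
  obtain ⟨m', hm'⟩ := hn
  have hm2 := hlt ⟨0, hd⟩
  obtain ⟨m, rfl⟩ : ∃ m, m' = m + 1 := ⟨m' - 1, by omega⟩
  have hm : n = 2 * (m + 1) := by omega
  have hn0 : (n : ℝ) ≠ 0 := Nat.cast_ne_zero.2 (NeZero.ne n)
  have hsym : ∀ i ≤ 2 * (m + 1), lamR n d a ℓ k (2 * (m + 1) - i) = lamR n d a ℓ k i := by
    intro i hi
    unfold lamR
    congr 1
    apply Finset.sum_congr rfl
    intro h _
    congr 2
    rw [← hm] at hi ⊢
    rw [Nat.cast_sub hi, ← Real.cos_nat_mul_two_pi_sub _ (a h)]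
    congr 1
    field_simp
    ring
  have h0 : lamR n d a ℓ k 0 = 2 * ∑ h : Fin d, Real.tan (k * ℓ h / 2) := by
    unfold lamR
    congr 1
    apply Finset.sum_congr rfl
    intro h _
    rw [(tan_half _ (hk h)).1]
    simp
  have h1 : lamR n d a ℓ k (m + 1) =
      2 * (∑ h ∈ Finset.univ.filter (fun h => Even (a h)), Real.tan (k * ℓ h / 2)
          - ∑ h ∈ Finset.univ.filter (fun h => Odd (a h)),
              Real.cos (k * ℓ h / 2) / Real.sin (k * ℓ h / 2)) := by
    unfold lamR
    congr 1
    rw [Finset.sum_filter, Finset.sum_filter, ← Finset.sum_sub_distrib]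
    apply Finset.sum_congr rfl
    intro h _
    have hcos : Real.cos (2 * Real.pi * (m + 1 : ℕ) * a h / n) = (-1) ^ (a h) := by
      rw [← Real.cos_nat_mul_pi]
      congr 1
      rw [div_eq_iff hn0, hm]
      push_cast
      ring
    rw [hcos]
    rcases Nat.even_or_odd (a h) with he | ho
    · rw [if_pos he, if_neg (Nat.not_odd_iff_even.2 he), he.neg_one_pow, (tan_half _ (hk h)).1]
      ring
    · rw [if_neg (Nat.not_even_iff_odd.2 ho), if_pos ho, ho.neg_one_pow, zero_sub,
        (tan_half _ (hk h)).2]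
  rw [Mmat_det_prod n d a hpos hlt, prod_zmod]
  have hr : Finset.range n = Finset.range (2 * (m + 1)) := by rw [← hm]
  have hh : n / 2 - 1 = m := by omega
  rw [hr, prod_fold _ m hsym, h0, h1, hh]
  rfl
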